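/- Let N be an odd perfect number with at least three distinct prime divisors, and let a, b, c denote respectively its third largest, second largest, and largest prime divisors. Then either a < (2N)^(1/7), or all three of the following hold: a² ∥ N, b² ∥ N, and c ∥ N. -/

import Mathlib

/-- Two positive integers `x`, `y` with `x ∣ y² + y + 1` and `y ∣ x² + x + 1` lie on a single
Vieta orbit. -/
lemma sq_add_sq_add_add_eq_five_mul {x y : ℕ} (hxy : x ≤ y) (hx0 : 0 < x)
    (hx : x ∣ y ^ 2 + y + 1) (hy : y ∣ x ^ 2 + x + 1) :
    x ^ 2 + y ^ 2 + x + y + 1 = 5 * (x * y) := by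
  induction x using Nat.strong_induction_on generalizing y with
  | _ x ih =>
    rcases hxy.eq_or_lt with rfl | hlt
    · have h1 : x ∣ 1 := by
        have : x ∣ x ^ 2 + x := ⟨x + 1, by ring⟩
        exact (Nat.dvd_add_right this).1 hx
      norm_num [Nat.dvd_one.1 h1]
    · obtain ⟨z, hz⟩ := hy
      have hz0 : 0 < z := by
        rcases Nat.eq_zero_or_pos z with rfl | h
        · simp at hz
        · exact h
      have hzx : z ≤ x := by
        by_contra! h
        nlinarith
      have hcop : Nat.Coprime x (y ^ 2) := by
        apply Nat.Coprime.pow_right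
        rw [Nat.coprime_iff_gcd_eq_one, ← Nat.dvd_one]
        have h2 : x.gcd y ∣ y * (y + 1) + 1 := by
          have := (Nat.gcd_dvd_left x y).trans hx
          rwa [show y ^ 2 + y + 1 = y * (y + 1) + 1 by ring] at this
        exact (Nat.dvd_add_right ((Nat.gcd_dvd_right x y).mul_right _)).1 h2
      have hxz : x ∣ z ^ 2 + z + 1 := by
        apply hcop.dvd_of_dvd_mul_left
        have e : y ^ 2 * (z ^ 2 + z + 1) =
            x * (x * (x + 1) ^ 2 + 2 * (x + 1) + y * (x + 1)) + (y ^ 2 + y + 1) := by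
          calc y ^ 2 * (z ^ 2 + z + 1) = (y * z) ^ 2 + y * (y * z) + y ^ 2 := by ring
            _ = _ := by rw [← hz]; ring
        rw [e]
        exact (Nat.dvd_mul_right _ _).add hx
      rcases hzx.eq_or_lt with rfl | hzlt
      · have h1 : z ∣ 1 := by
          have : z ∣ z ^ 2 + z := ⟨z + 1, by ring⟩
          exact (Nat.dvd_add_right this).1 hxz
        obtain rfl := Nat.dvd_one.1 h1
        have : y = 3 := by omega
        subst this
        norm_num
      · have key := ih z hzlt hzx hz0 ⟨y, by rw [hz, mul_comm]⟩ hxz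
        have h5 : z + y + 1 = 5 * x := by
          apply Nat.eq_of_mul_eq_mul_left hz0
          nlinarith
        nlinarith

lemma not_sq_dvd_of_dvd {b c : ℕ} (hb : Odd b) (hc : Odd c) (hb1 : 1 < b) (hbc : b < c)
    (h1 : c ∣ b ^ 2 + b + 1) : ¬ b ^ 2 ∣ c ^ 2 + c + 1 := by
  intro h2
  obtain ⟨l, hl⟩ := h1
  have hcb : b + 2 ≤ c := by
    obtain ⟨u, rfl⟩ := hb; obtain ⟨v, rfl⟩ := hc; omega
  have hlo : Odd l := by
    have : Odd (c * l) := by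
      rw [← hl]
      obtain ⟨u, rfl⟩ := hb
      exact ⟨2 * u ^ 2 + 3 * u + 1, by ring⟩
    exact (Nat.odd_mul.1 this).2
  have hlb : l + 2 ≤ b := by
    have : l < b := by
      by_contra! h
      nlinarith
    obtain ⟨u, rfl⟩ := hb; obtain ⟨v, rfl⟩ := hlo; omega
  have h3 : b ^ 2 ∣ l ^ 2 + l + 1 + b * (l + 2) := by
    have h4 : b ^ 2 ∣ l ^ 2 * (c ^ 2 + c + 1) := h2.mul_left _
    have e : l ^ 2 * (c ^ 2 + c + 1) =
        b ^ 2 * (b ^ 2 + 2 * b + 3 + l) + (l ^ 2 + l + 1 + b * (l + 2)) := by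
      calc l ^ 2 * (c ^ 2 + c + 1) = (c * l) ^ 2 + l * (c * l) + l ^ 2 := by ring
        _ = _ := by rw [← hl]; ring
    rw [e] at h4
    exact (Nat.dvd_add_right (Nat.dvd_mul_right _ _)).1 h4
  obtain ⟨t, ht⟩ := h3
  have ht2 : t < 2 := by
    by_contra! h
    nlinarith
  interval_cases t
  · simp at ht
  · have hev : Even (l ^ 2 + l + 1 + b * (l + 2)) := by
      have hb' := hb
      have hl' := hlo
      grind
    rw [ht] at hev
    simp [Nat.even_pow] at hev
    exact (Nat.not_even_iff_odd.2 hb) hev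

lemma lt_sq_of_mul_le {a x S : ℕ} (ha : 0 < a) {k : ℕ} (hx : a ^ k < x)
    (h : x * S ≤ a ^ (k + 2)) : S < a ^ 2 := by
  by_contra! hS
  have : a ^ k * a ^ 2 < x * S := by
    calc a ^ k * a ^ 2 < x * a ^ 2 := by gcongr
      _ ≤ x * S := by gcongr
  rw [← pow_add] at this
  omega

lemma not_dvd_of_dvd_of_lt {p q a S : ℕ} (hp : p.Prime) (hq : q.Prime) (hpq : p ≠ q)
    (hS0 : 0 < S) (hap : a ≤ p) (haq : a ≤ q) (hS : S < a ^ 2) (hq' : q ∣ S) : ¬ p ∣ S := by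
  intro hp'
  have := Nat.le_of_dvd hS0
    (((Nat.coprime_primes hp hq).2 hpq).mul_dvd_of_dvd_of_dvd hp' hq')
  nlinarith

lemma dvd_and_dvd_of_sq_dvd_mul {c m S : ℕ} (hc : c.Prime) (hm0 : 0 < m) (hS0 : 0 < S)
    (hm : m < c ^ 2) (hS : S < c ^ 2) (h : c ^ 2 ∣ m * S) : c ∣ m ∧ c ∣ S := by
  constructor
  · by_contra hn
    have : c ^ 2 ∣ S :=
      (((Nat.Prime.coprime_iff_not_dvd hc).2 hn).pow_left 2).dvd_of_dvd_mul_left h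
    exact absurd (Nat.le_of_dvd hS0 this) (by omega)
  · by_contra hn
    have : c ^ 2 ∣ m :=
      (((Nat.Prime.coprime_iff_not_dvd hc).2 hn).pow_left 2).dvd_of_dvd_mul_right h
    exact absurd (Nat.le_of_dvd hm0 this) (by omega)

lemma coprime_sq_add_self_add_one (n : ℕ) : Nat.Coprime n (n ^ 2 + n + 1) := by
  rw [show n ^ 2 + n + 1 = 1 + n * (n + 1) by ring]
  simp

lemma not_exponents_two_two_two {a b c M S : ℕ} (ha : a.Prime) (hb : b.Prime) (hc : c.Prime)
    (ha2 : Odd a) (hb2 : Odd b) (hc2 : Odd c) (hab : a < b) (hbc : b < c) (hS0 : 0 < S)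
    (hS : a ^ 2 * b ^ 2 * c ^ 2 * S ≤ a ^ 7)
    (h : (a ^ 2 + a + 1) * (b ^ 2 + b + 1) * (c ^ 2 + c + 1) * S =
      2 * (a ^ 2 * b ^ 2 * c ^ 2 * M)) : False := by
  have ha1 := ha.two_le
  have hSa : S < a := by
    by_contra! hle
    have : a ^ 2 * a ^ 2 * a ^ 2 * a < a ^ 2 * b ^ 2 * c ^ 2 * S := by
      have : a < c := hab.trans hbc
      calc a ^ 2 * a ^ 2 * a ^ 2 * a < a ^ 2 * b ^ 2 * c ^ 2 * a := by gcongr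
        _ ≤ _ := by gcongr
    nlinarith
  have cop : ∀ p : ℕ, p.Prime → a ≤ p → Nat.Coprime (p ^ 2) S := fun p hp hap =>
    Nat.Coprime.pow_left 2 ((Nat.Prime.coprime_iff_not_dvd hp).2
      fun hd => absurd (Nat.le_of_dvd hS0 hd) (by omega))
  have hcop : Nat.Coprime (a ^ 2 * b ^ 2 * c ^ 2) S :=
    ((cop a ha le_rfl).mul_left (cop b hb hab.le)).mul_left (cop c hc (hab.trans hbc).le)
  have hd : a ^ 2 * b ^ 2 * c ^ 2 ∣ (a ^ 2 + a + 1) * (b ^ 2 + b + 1) * (c ^ 2 + c + 1) := by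
    apply hcop.dvd_of_dvd_mul_right
    rw [h]
    exact ⟨2 * M, by ring⟩
  obtain ⟨k, hk⟩ := hd
  have odd1 : ∀ n : ℕ, Odd n → Odd (n ^ 2 + n + 1) := fun n ⟨u, hu⟩ =>
    ⟨2 * u ^ 2 + 3 * u + 1, by subst hu; ring⟩
  have hkodd : Odd k := by
    have := ((odd1 a ha2).mul (odd1 b hb2)).mul (odd1 c hc2)
    rw [hk] at this
    exact (Nat.odd_mul.1 this).2
  have h3a : 3 ≤ a := by obtain ⟨u, rfl⟩ := ha2; omega
  have h5b : 5 ≤ b := by obtain ⟨u, rfl⟩ := ha2; obtain ⟨v, rfl⟩ := hb2; omega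
  have h7c : 7 ≤ c := by obtain ⟨u, rfl⟩ := hb2; obtain ⟨v, rfl⟩ := hc2; omega
  have hP : 0 < a ^ 2 * b ^ 2 * c ^ 2 := by positivity
  have hk3 : k < 3 := by
    by_contra! hk3
    have e1 : 9 * (a ^ 2 + a + 1) ≤ 13 * a ^ 2 := by nlinarith
    have e2 : 25 * (b ^ 2 + b + 1) ≤ 31 * b ^ 2 := by nlinarith
    have e3 : 49 * (c ^ 2 + c + 1) ≤ 57 * c ^ 2 := by nlinarith
    have e4 := Nat.mul_le_mul (Nat.mul_le_mul e1 e2) e3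
    have e5 : a ^ 2 * b ^ 2 * c ^ 2 * 3 ≤ a ^ 2 * b ^ 2 * c ^ 2 * k := by gcongr
    nlinarith
  have hk1 : 1 < k := by
    by_contra! hk1
    have : a ^ 2 * b ^ 2 * c ^ 2 <
        (a ^ 2 + a + 1) * (b ^ 2 + b + 1) * (c ^ 2 + c + 1) := by
      gcongr <;> omega
    rw [hk] at this
    nlinarith
  obtain ⟨u, rfl⟩ := hkodd
  omega

lemma not_exponents_one_two_two {a b c M S : ℕ} (ha : a.Prime) (hb : b.Prime) (hc : c.Prime)
    (ha2 : Odd a) (hb2 : Odd b) (hc2 : Odd c) (hab : a < b) (hbc : b < c) (hS0 : 0 < S)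
    (hS : a * b ^ 2 * c ^ 2 * S ≤ a ^ 7)
    (h : (a + 1) * (b ^ 2 + b + 1) * (c ^ 2 + c + 1) * S =
      2 * (a * b ^ 2 * c ^ 2 * M)) : False := by
  have ha1 := ha.two_le
  have hac := hab.trans hbc
  have hSa : S < a ^ 2 := by
    refine lt_sq_of_mul_le ha.pos (k := 5) ?_ hS
    calc a ^ 5 = a * a ^ 2 * a ^ 2 := by ring
      _ < a * b ^ 2 * c ^ 2 := by gcongr
  have hSc : S < c ^ 2 := by nlinarith
  have hab' : a + 2 ≤ b := by obtain ⟨u, rfl⟩ := ha2; obtain ⟨v, rfl⟩ := hb2; omega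
  have cop : ∀ p : ℕ, p.Prime → a + 1 < p → Nat.Coprime (p ^ 2) (a + 1) := fun p hp hap =>
    Nat.Coprime.pow_left 2 ((Nat.Prime.coprime_iff_not_dvd hp).2
      fun hd => absurd (Nat.le_of_dvd (by omega) hd) (by omega))
  have hcd : c ^ 2 ∣ (b ^ 2 + b + 1) * S := by
    apply (cop c hc (by omega)).dvd_of_dvd_mul_left
    apply ((coprime_sq_add_self_add_one c).pow_left 2).dvd_of_dvd_mul_left
    exact ⟨2 * (a * b ^ 2 * M), by linarith⟩
  obtain ⟨h1, h2⟩ := dvd_and_dvd_of_sq_dvd_mul hc (by omega) hS0 (by nlinarith) hSc hcd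
  have hbS : ¬ b ∣ S :=
    not_dvd_of_dvd_of_lt hb hc hbc.ne hS0 hab.le hac.le hSa h2
  refine not_sq_dvd_of_dvd hb2 hc2 hb.one_lt hbc h1 ?_
  apply (((Nat.Prime.coprime_iff_not_dvd hb).2 hbS).pow_left 2).dvd_of_dvd_mul_left
  apply (cop b hb (by omega)).dvd_of_dvd_mul_left
  apply ((coprime_sq_add_self_add_one b).pow_left 2).dvd_of_dvd_mul_left
  exact ⟨2 * (a * c ^ 2 * M), by linarith⟩

/-- No odd primes `a < b < c` satisfy `c ∣ a² + a + 1`, `a b ∣ c² + c + 1` and `a ∣ b + 1`. -/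
lemma not_mul_dvd_of_dvd_add_one {a b c : ℕ} (ha : a.Prime) (hb : b.Prime)
    (ha2 : Odd a) (hb2 : Odd b) (hab : a < b) (hbc : b < c)
    (h1 : c ∣ a ^ 2 + a + 1) (h2 : a ∣ c ^ 2 + c + 1) (h3 : b ∣ c ^ 2 + c + 1)
    (h4 : a ∣ b + 1) : False := by
  have key := sq_add_sq_add_add_eq_five_mul (hab.trans hbc).le ha.pos h2 h1
  have ha1 := ha.two_le
  have hc5 : c < 5 * a := by
    by_contra! h
    nlinarith
  obtain ⟨j, hj⟩ := h4
  have hj5 : j < 5 := by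
    by_contra! h
    nlinarith
  zify at key h3
  have h5 : (b : ℤ) ∣ 5 * c - a - 1 := by
    have h6 : (b : ℤ) ∣ a * (5 * c - a - 1) := by
      rwa [show (a : ℤ) * (5 * c - a - 1) = c ^ 2 + c + 1 by linarith]
    refine IsCoprime.dvd_of_dvd_mul_left ?_ h6
    exact Nat.isCoprime_iff_coprime.2 ((Nat.coprime_primes hb ha).2 hab.ne')
  obtain ⟨u, hu⟩ := ha2
  obtain ⟨v, hv⟩ := hb2
  interval_cases j
  · omega
  · omega
  · have hbz : (b : ℤ) = 2 * a - 1 := by omega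
    have h7 : (b : ℤ) ∣ 10 * c - 3 := by
      rw [show (10 * c - 3 : ℤ) = 2 * (5 * c - a - 1) + b by rw [hbz]; ring]
      exact (h5.mul_left 2).add (dvd_refl _)
    have h8 : (b : ℤ) ∣ ((139 : ℕ) : ℤ) := by
      rw [show ((139 : ℕ) : ℤ) = 100 * ((c : ℤ) ^ 2 + c + 1) - (10 * c - 3) * (10 * c + 13) by
        push_cast; ring]
      exact (h3.mul_left 100).sub (h7.mul_right _)
    have h9 := (Nat.prime_dvd_prime_iff_eq hb (by norm_num)).1 (Int.natCast_dvd_natCast.1 h8)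
    omega
  · omega
  · have hbz : (b : ℤ) = 4 * a - 1 := by omega
    have h7 : (b : ℤ) ∣ 20 * c - 5 := by
      rw [show (20 * c - 5 : ℤ) = 4 * (5 * c - a - 1) + b by rw [hbz]; ring]
      exact (h5.mul_left 4).add (dvd_refl _)
    have h8 : (b : ℤ) ∣ ((525 : ℕ) : ℤ) := by
      rw [show ((525 : ℕ) : ℤ) = 400 * ((c : ℤ) ^ 2 + c + 1) - (20 * c - 5) * (20 * c + 25) by
        push_cast; ring]
      exact (h3.mul_left 400).sub (h7.mul_right _)
    have h9 : b ∣ 3 * 5 * 5 * 7 := Int.natCast_dvd_natCast.1 h8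
    have h10 : b ≤ 7 := by
      rcases hb.dvd_mul.1 h9 with h | h
      · rcases hb.dvd_mul.1 h with h | h
        · rcases hb.dvd_mul.1 h with h | h <;>
            exact (Nat.le_of_dvd (by norm_num) h).trans (by norm_num)
        · exact (Nat.le_of_dvd (by norm_num) h).trans (by norm_num)
      · exact Nat.le_of_dvd (by norm_num) h
    omega

lemma not_exponents_two_one_two {a b c M S : ℕ} (ha : a.Prime) (hb : b.Prime) (hc : c.Prime)
    (ha2 : Odd a) (hb2 : Odd b) (hc2 : Odd c) (hab : a < b) (hbc : b < c) (hS0 : 0 < S)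
    (hS : a ^ 2 * b * c ^ 2 * S ≤ a ^ 7)
    (h : (a ^ 2 + a + 1) * (b + 1) * (c ^ 2 + c + 1) * S =
      2 * (a ^ 2 * b * c ^ 2 * M)) : False := by
  have ha1 := ha.two_le
  have hac := hab.trans hbc
  have hSa : S < a ^ 2 := by
    refine lt_sq_of_mul_le ha.pos (k := 5) ?_ hS
    calc a ^ 5 = a ^ 2 * a * a ^ 2 := by ring
      _ < a ^ 2 * b * c ^ 2 := by gcongr
  have hSc : S < c ^ 2 := by nlinarith
  have hbc' : b + 2 ≤ c := by obtain ⟨u, rfl⟩ := hb2; obtain ⟨v, rfl⟩ := hc2; omega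
  have hcd : c ^ 2 ∣ (a ^ 2 + a + 1) * S := by
    have cop : Nat.Coprime c (b + 1) := (Nat.Prime.coprime_iff_not_dvd hc).2
      fun hd => absurd (Nat.le_of_dvd (by omega) hd) (by omega)
    apply (cop.pow_left 2).dvd_of_dvd_mul_left
    apply ((coprime_sq_add_self_add_one c).pow_left 2).dvd_of_dvd_mul_left
    exact ⟨2 * (a ^ 2 * b * M), by linarith⟩
  obtain ⟨h1, h2⟩ := dvd_and_dvd_of_sq_dvd_mul hc (by omega) hS0 (by nlinarith) hSc hcd
  have haS : ¬ a ∣ S := not_dvd_of_dvd_of_lt ha hc hac.ne hS0 le_rfl hac.le hSa h2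
  have hbS : ¬ b ∣ S := not_dvd_of_dvd_of_lt hb hc hbc.ne hS0 hab.le hac.le hSa h2
  have hba : ¬ b ∣ a ^ 2 + a + 1 := by
    intro hd
    have := Nat.le_of_dvd (by omega)
      (((Nat.coprime_primes hb hc).2 hbc.ne).mul_dvd_of_dvd_of_dvd hd h1)
    nlinarith
  have h3 : b ∣ c ^ 2 + c + 1 := by
    apply ((Nat.Prime.coprime_iff_not_dvd hb).2 hbS).dvd_of_dvd_mul_left
    apply ((Nat.Prime.coprime_iff_not_dvd hb).2 hba).dvd_of_dvd_mul_left
    apply (show Nat.Coprime b (b + 1) by simp).dvd_of_dvd_mul_left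
    exact ⟨2 * (a ^ 2 * c ^ 2 * M), by linarith⟩
  have h4 : a ^ 2 ∣ (c ^ 2 + c + 1) * (b + 1) := by
    apply (((Nat.Prime.coprime_iff_not_dvd ha).2 haS).pow_left 2).dvd_of_dvd_mul_left
    apply ((coprime_sq_add_self_add_one a).pow_left 2).dvd_of_dvd_mul_left
    exact ⟨2 * (b * c ^ 2 * M), by linarith⟩
  by_cases h5 : a ∣ c ^ 2 + c + 1
  · by_cases h6 : a ∣ b + 1
    · exact not_mul_dvd_of_dvd_add_one ha hb ha2 hb2 hab hbc h1 h5 h3 h6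
    · exact not_sq_dvd_of_dvd ha2 hc2 ha.one_lt hac h1
        ((((Nat.Prime.coprime_iff_not_dvd ha).2 h6).pow_left 2).dvd_of_dvd_mul_right h4)
  · have h7 := Nat.le_of_dvd (by omega)
      ((((Nat.Prime.coprime_iff_not_dvd ha).2 h5).pow_left 2).dvd_of_dvd_mul_left h4)
    have hcS : c ≤ S := Nat.le_of_dvd hS0 h2
    omega

lemma even_sigma_one_prime_pow {p k : ℕ} (hp : p.Prime) (hp2 : Odd p) (hk : Odd k) :
    Even (ArithmeticFunction.sigma 1 (p ^ k)) := by
  rw [ArithmeticFunction.sigma_one_apply_prime_pow hp, Finset.even_sum_iff_even_card_odd]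
  rw [Finset.filter_true_of_mem fun i _ => hp2.pow]
  simpa using hk.add_one

lemma sigma_one_prime_sq {p : ℕ} (hp : p.Prime) :
    ArithmeticFunction.sigma 1 (p ^ 2) = p ^ 2 + p + 1 := by
  rw [ArithmeticFunction.sigma_one_apply_prime_pow hp]
  simp [Finset.sum_range_succ]
  ring

lemma sigma_one_prime_pow_one {p : ℕ} (hp : p.Prime) :
    ArithmeticFunction.sigma 1 (p ^ 1) = p + 1 := by
  rw [ArithmeticFunction.sigma_one_apply_prime_pow hp]
  simp [Finset.sum_range_succ]
  ring

lemma le_sigma_one {n : ℕ} (hn : n ≠ 0) : n ≤ ArithmeticFunction.sigma 1 n := by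
  rw [ArithmeticFunction.sigma_one_apply]
  exact Finset.single_le_sum (f := fun d => d) (fun _ _ => Nat.zero_le _)
    (Nat.mem_divisors_self n hn)

lemma exponent_cases {α β γ : ℕ} (hα : α ≠ 0) (hβ : β ≠ 0) (hγ : γ ≠ 0)
    (hexp : α + β + γ < 7) (hαβ : ¬ (Odd α ∧ Odd β)) (hαγ : ¬ (Odd α ∧ Odd γ))
    (hβγ : ¬ (Odd β ∧ Odd γ)) :
    (α = 2 ∧ β = 2 ∧ γ = 1) ∨ (α = 2 ∧ β = 2 ∧ γ = 2) ∨
      (α = 1 ∧ β = 2 ∧ γ = 2) ∨ (α = 2 ∧ β = 1 ∧ γ = 2) := by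
  simp only [Nat.odd_iff] at hαβ hαγ hβγ
  rcases Nat.mod_two_eq_zero_or_one α with h | h
  · rcases Nat.mod_two_eq_zero_or_one β with h' | h'
    · obtain ⟨rfl, rfl⟩ : α = 2 ∧ β = 2 := by omega
      omega
    · have : γ % 2 = 0 := by omega
      obtain ⟨rfl, rfl, rfl⟩ : α = 2 ∧ β = 1 ∧ γ = 2 := by omega
      simp
  · have h1 : β % 2 = 0 := by omega
    have h2 : γ % 2 = 0 := by omega
    obtain ⟨rfl, rfl, rfl⟩ : α = 1 ∧ β = 2 ∧ γ = 2 := by omega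
    simp

/-- An odd perfect number whose three given prime divisors `a < b < c` have exact exponents
`α, β, γ` satisfies `a ^ 7 < 2 N` unless `(α, β, γ) = (2, 2, 1)`. -/
lemma exponents_eq_of_perfect {a b c α β γ M N : ℕ} (ha : a.Prime) (hb : b.Prime) (hc : c.Prime)
    (hab : a < b) (hbc : b < c) (hodd : Odd N) (hperf : Nat.Perfect N)
    (hN : N = a ^ α * b ^ β * c ^ γ * M) (hα : α ≠ 0) (hβ : β ≠ 0) (hγ : γ ≠ 0)
    (haM : ¬ a ∣ M) (hbM : ¬ b ∣ M) (hcM : ¬ c ∣ M) (hle : 2 * N ≤ a ^ 7) :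
    α = 2 ∧ β = 2 ∧ γ = 1 := by
  have hN0 : 0 < N := hodd.pos
  have hM0 : M ≠ 0 := by rintro rfl; simp at haM
  have odd_of : ∀ p, p ∣ N → Odd p := fun p hp => Odd.of_dvd_nat hodd hp
  have ha2 := odd_of a (by
    rw [hN]; exact (((dvd_pow_self a hα).mul_right _).mul_right _).mul_right _)
  have hb2 := odd_of b (by
    rw [hN]; exact (((dvd_pow_self b hβ).mul_left _).mul_right _).mul_right _)
  have hc2 := odd_of c (by rw [hN]; exact ((dvd_pow_self c hγ).mul_left _).mul_right _)
  have hac := hab.trans hbc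
  have cab := (Nat.coprime_primes ha hb).2 hab.ne
  have cac := (Nat.coprime_primes ha hc).2 hac.ne
  have cbc := (Nat.coprime_primes hb hc).2 hbc.ne
  have caM := (Nat.Prime.coprime_iff_not_dvd ha).2 haM
  have cbM := (Nat.Prime.coprime_iff_not_dvd hb).2 hbM
  have ccM := (Nat.Prime.coprime_iff_not_dvd hc).2 hcM
  set σ := ArithmeticFunction.sigma 1 with hσ
  have hmul : σ N = σ (a ^ α) * σ (b ^ β) * σ (c ^ γ) * σ M := by
    rw [hN, ArithmeticFunction.isMultiplicative_sigma.map_mul_of_coprime,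
      ArithmeticFunction.isMultiplicative_sigma.map_mul_of_coprime,
      ArithmeticFunction.isMultiplicative_sigma.map_mul_of_coprime]
    · exact cab.pow _ _
    · exact (cac.pow _ _).mul_left (cbc.pow _ _)
    · exact ((caM.pow_left _).mul_left (cbM.pow_left _)).mul_left (ccM.pow_left _)
  have hsum : σ (a ^ α) * σ (b ^ β) * σ (c ^ γ) * σ M = 2 * (a ^ α * b ^ β * c ^ γ * M) := by
    rw [← hmul, ← hN, hσ, ArithmeticFunction.sigma_one_apply]
    exact (Nat.perfect_iff_sum_divisors_eq_two_mul hN0).1 hperf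
  have hS0 : 0 < σ M := (Nat.pos_of_ne_zero hM0).trans_le (le_sigma_one hM0)
  have hS : a ^ α * b ^ β * c ^ γ * σ M ≤ a ^ 7 := by
    refine le_trans ?_ hle
    rw [hN, ← hsum]
    gcongr
    · exact le_sigma_one (pow_ne_zero _ ha.ne_zero)
    · exact le_sigma_one (pow_ne_zero _ hb.ne_zero)
    · exact le_sigma_one (pow_ne_zero _ hc.ne_zero)
  have hexp : α + β + γ < 7 := by
    rw [← Nat.pow_lt_pow_iff_right ha.one_lt]
    calc a ^ (α + β + γ) = a ^ α * a ^ β * a ^ γ := by ring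
      _ < a ^ α * b ^ β * c ^ γ := by have := ha.pos; gcongr
      _ ≤ a ^ α * b ^ β * c ^ γ * σ M := Nat.le_mul_of_pos_right _ hS0
      _ ≤ a ^ 7 := hS
  have not_four : ∀ x y z : ℕ, Even x → Even y → x * y * z ≠ 2 * N := by
    rintro x y z ⟨u, rfl⟩ ⟨v, rfl⟩ h
    obtain ⟨w, hw⟩ := hodd
    have : 2 * (u * v * z) = N := by linarith
    omega
  rw [← hN] at hsum
  have hαβ : ¬ (Odd α ∧ Odd β) := fun ⟨h1, h2⟩ =>
    not_four _ _ (σ (c ^ γ) * σ M) (even_sigma_one_prime_pow ha ha2 h1)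
      (even_sigma_one_prime_pow hb hb2 h2) (by rw [← hsum, ← hσ]; ring)
  have hαγ : ¬ (Odd α ∧ Odd γ) := fun ⟨h1, h2⟩ =>
    not_four _ _ (σ (b ^ β) * σ M) (even_sigma_one_prime_pow ha ha2 h1)
      (even_sigma_one_prime_pow hc hc2 h2) (by rw [← hsum, ← hσ]; ring)
  have hβγ : ¬ (Odd β ∧ Odd γ) := fun ⟨h1, h2⟩ =>
    not_four _ _ (σ (a ^ α) * σ M) (even_sigma_one_prime_pow hb hb2 h1)
      (even_sigma_one_prime_pow hc hc2 h2) (by rw [← hsum, ← hσ]; ring)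
  rw [hN] at hsum
  have hcases : (α = 2 ∧ β = 2 ∧ γ = 1) ∨ (α = 2 ∧ β = 2 ∧ γ = 2) ∨
      (α = 1 ∧ β = 2 ∧ γ = 2) ∨ (α = 2 ∧ β = 1 ∧ γ = 2) :=
    exponent_cases hα hβ hγ hexp hαβ hαγ hβγ
  rcases hcases with h | ⟨rfl, rfl, rfl⟩ | ⟨rfl, rfl, rfl⟩ | ⟨rfl, rfl, rfl⟩
  · exact h
  · rw [hσ, sigma_one_prime_sq ha, sigma_one_prime_sq hb, sigma_one_prime_sq hc] at hsum
    exact (not_exponents_two_two_two ha hb hc ha2 hb2 hc2 hab hbc hS0 hS hsum).elim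
  · rw [hσ, sigma_one_prime_pow_one ha, sigma_one_prime_sq hb, sigma_one_prime_sq hc] at hsum
    rw [pow_one] at hS hsum
    exact (not_exponents_one_two_two ha hb hc ha2 hb2 hc2 hab hbc hS0 hS hsum).elim
  · rw [hσ, sigma_one_prime_sq ha, sigma_one_prime_pow_one hb, sigma_one_prime_sq hc] at hsum
    rw [pow_one] at hS hsum
    exact (not_exponents_two_one_two ha hb hc ha2 hb2 hc2 hab hbc hS0 hS hsum).elim

/-- Let N be an odd perfect number with at least three distinct
prime divisors, with c, b, a its largest, second largest and third largest
prime divisors. Then either a < (2N)^(1/7) (i.e., a^7 < 2N), or all of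
a² ∥ N, b² ∥ N, and c ∥ N hold. -/
theorem stmt_16 (N : ℕ) (hodd : Odd N) (hperf : Nat.Perfect N)
    (hk : 3 ≤ N.primeFactors.card)
    (a b c : ℕ)
    (ha : a ∈ N.primeFactors) (hb : b ∈ N.primeFactors) (hc : c ∈ N.primeFactors)
    (ha2 : (N.primeFactors.filter (fun q => a < q)).card = 2)
    (hb1 : (N.primeFactors.filter (fun q => b < q)).card = 1)
    (hc0 : (N.primeFactors.filter (fun q => c < q)).card = 0) :
    a ^ 7 < 2 * N ∨
      ((a ^ 2 ∣ N ∧ ¬ a ^ 3 ∣ N) ∧ (b ^ 2 ∣ N ∧ ¬ b ^ 3 ∣ N) ∧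
        (c ∣ N ∧ ¬ c ^ 2 ∣ N)) := by
  have lt_of_card : ∀ x y : ℕ, (N.primeFactors.filter (fun q => y < q)).card <
      (N.primeFactors.filter (fun q => x < q)).card → x < y := by
    intro x y h
    by_contra! hyx
    exact absurd (Finset.card_le_card (Finset.monotone_filter_right N.primeFactors
      fun q _ (hq : x < q) => hyx.trans_lt hq)) h.not_ge
  have hab : a < b := lt_of_card a b (by omega)
  have hbc : b < c := lt_of_card b c (by omega)
  have hac := hab.trans hbc
  have hN0 : N ≠ 0 := hodd.pos.ne'
  obtain ⟨pa, da, -⟩ := Nat.mem_primeFactors.1 ha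
  obtain ⟨pb, db, -⟩ := Nat.mem_primeFactors.1 hb
  obtain ⟨pc, dc, -⟩ := Nat.mem_primeFactors.1 hc
  have cab := (Nat.coprime_primes pa pb).2 hab.ne
  have cac := (Nat.coprime_primes pa pc).2 hac.ne
  have cbc := (Nat.coprime_primes pb pc).2 hbc.ne
  have hdvd : a ^ N.factorization a * b ^ N.factorization b * c ^ N.factorization c ∣ N :=
    ((cac.pow _ _).mul_left (cbc.pow _ _)).mul_dvd_of_dvd_of_dvd
      ((cab.pow _ _).mul_dvd_of_dvd_of_dvd (Nat.ordProj_dvd N a) (Nat.ordProj_dvd N b))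
      (Nat.ordProj_dvd N c)
  obtain ⟨M, hM⟩ := hdvd
  have not_dvd : ∀ p k : ℕ, p.Prime → p ^ N.factorization p * k ∣ N → ¬ p ∣ k := by
    intro p k hp h hpk
    refine Nat.pow_succ_factorization_not_dvd hN0 hp ?_
    rw [pow_succ]
    exact (Nat.mul_dvd_mul_left _ hpk).trans h
  have haM : ¬ a ∣ M := not_dvd a M pa (by
    conv_rhs => rw [hM]
    exact ⟨b ^ N.factorization b * c ^ N.factorization c, by ring⟩)
  have hbM : ¬ b ∣ M := not_dvd b M pb (by
    conv_rhs => rw [hM]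
    exact ⟨a ^ N.factorization a * c ^ N.factorization c, by ring⟩)
  have hcM : ¬ c ∣ M := not_dvd c M pc (by
    conv_rhs => rw [hM]
    exact ⟨a ^ N.factorization a * b ^ N.factorization b, by ring⟩)
  rcases lt_or_ge (a ^ 7) (2 * N) with h | hle
  · exact Or.inl h
  · obtain ⟨h1, h2, h3⟩ := exponents_eq_of_perfect pa pb pc hab hbc hodd hperf hM
      (pa.factorization_pos_of_dvd hN0 da).ne' (pb.factorization_pos_of_dvd hN0 db).ne'
      (pc.factorization_pos_of_dvd hN0 dc).ne' haM hbM hcM hle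
    refine Or.inr ⟨⟨?_, ?_⟩, ⟨?_, ?_⟩, dc, ?_⟩
    · rw [pa.pow_dvd_iff_le_factorization hN0]; omega
    · rw [pa.pow_dvd_iff_le_factorization hN0]; omega
    · rw [pb.pow_dvd_iff_le_factorization hN0]; omega
    · rw [pb.pow_dvd_iff_le_factorization hN0]; omega
    · rw [pc.pow_dvd_iff_le_factorization hN0]; omega
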